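/- For every positive integer n, there is an injective group homomorphism from G(C_4) into G(P_n) if and only if 3 ≤ n. -/

import Mathlib

/-!
If `n ≤ 2`, the complement of `P_n` has no edges and `G(P_n)` is free; commuting elements of a free
group lie in a common cyclic subgroup, while a diagonal of `C_4` gives a copy of `ℤ²` in `G(C_4)`.

Let `E` be a single edge. The complement of `C_4` is `E ⊔ E` and that of `P_3`, an induced subgraph
of `P_n` for `3 ≤ n`, is `E` together with an isolated vertex `t`. In the free product
`A(E) * ⟨t⟩`, the subgroups `A(E)` and `t A(E) t⁻¹` generate a copy of `A(E) * A(E) = A(E ⊔ E)`: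
sending `t` to the automorphism of `A(E ⊔ E)` that swaps the two edges maps `A(E) * ⟨t⟩` to the
holomorph of `A(E ⊔ E)` and recovers the two copies of `A(E)`.
-/

open SimpleGraph

/-- The set of commutator relations of a graph: one commutator for each edge. -/
def raagRels {V : Type} (G : SimpleGraph V) : Set (FreeGroup V) :=
  {r | ∃ u v : V, G.Adj u v ∧
    r = FreeGroup.of u * FreeGroup.of v * (FreeGroup.of u)⁻¹ * (FreeGroup.of v)⁻¹}

/-- The right-angled Artin group `A(G)` of a graph `G`. -/
abbrev RAAG {V : Type} (G : SimpleGraph V) : Type := PresentedGroup (raagRels G)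

/-- `G(Γ) = A(Γᶜ)`, the RAAG on the complement graph. -/
abbrev GG {V : Type} (G : SimpleGraph V) : Type := RAAG Gᶜ

/-- A linear forest: an acyclic graph all of whose vertices have degree at most 2. -/
def IsLinearForest {V : Type} (G : SimpleGraph V) : Prop :=
  G.IsAcyclic ∧ ∀ v : V, (G.neighborSet v).ncard ≤ 2

/-- The star of a vertex: the vertex together with its neighbours. -/
def starSet {V : Type} (G : SimpleGraph V) (v : V) : Set V :=
  insert v (G.neighborSet v)

/-- The double `D_v(G)` of `G` along the star of `v`: original vertices together with
copies of the vertices outside the star. -/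
def GraphDouble {V : Type} (G : SimpleGraph V) (v : V) :
    SimpleGraph (V ⊕ {w : V // w ∉ starSet G v}) :=
  SimpleGraph.fromRel (fun x y =>
    match x, y with
    | Sum.inl a, Sum.inl b => G.Adj a b
    | Sum.inr a, Sum.inr b => G.Adj a.1 b.1
    | Sum.inl a, Sum.inr b => a ∈ starSet G v ∧ G.Adj a b.1
    | Sum.inr _, Sum.inl _ => False)

/-- Subdivision of the edge `[v,w]` of `Λ`, with `none` as the new vertex. -/
def SubdivEdge {V : Type} (Λ : SimpleGraph V) (v w : V) : SimpleGraph (Option V) :=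
  SimpleGraph.fromRel (fun x y =>
    match x, y with
    | some a, some b => Λ.Adj a b ∧ ¬((a = v ∧ b = w) ∨ (a = w ∧ b = v))
    | some a, none => a = v ∨ a = w
    | none, some _ => False
    | none, none => False)

/-- The graph `Λ_u⁻(w₁,w₂)`, with `none` as the new vertex `v`. -/
def MinusGraph {V : Type} (Λ : SimpleGraph V) (u w₁ w₂ : V) : SimpleGraph (Option V) :=
  SimpleGraph.fromRel (fun x y =>
    match x, y with
    | some a, some b => Λ.Adj a b ∧
        ¬((a = u ∧ b = w₁) ∨ (a = w₁ ∧ b = u) ∨ (a = u ∧ b = w₂) ∨ (a = w₂ ∧ b = u))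
    | some a, none => a = w₁ ∨ a = u ∨ a = w₂
    | none, some _ => False
    | none, none => False)

/-- The graph `Λ_u⁺(w₁,w₂)`: `Λ_u⁻(w₁,w₂)` with the edge `[u,w₂]` added back. -/
def PlusGraph {V : Type} (Λ : SimpleGraph V) (u w₁ w₂ : V) : SimpleGraph (Option V) :=
  SimpleGraph.fromRel (fun x y =>
    (MinusGraph Λ u w₁ w₂).Adj x y ∨ (x = some u ∧ y = some w₂))

lemma eq_of_commute_freeGroup_of {α : Type*} {a b : α}
    (h : Commute (FreeGroup.of a) (FreeGroup.of b)) : a = b := by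
  classical
  have hword : a = b ∧ b = a := by
    simpa [FreeGroup.toWord_mul] using congrArg FreeGroup.toWord h.eq
  exact hword.1

lemma isCyclic_of_isFreeGroup (F : Type*) [Group F] [IsFreeGroup F]
    [IsMulCommutative F] : IsCyclic F := by
  let e := IsFreeGroup.mulEquiv F
  have : Subsingleton (IsFreeGroup.Generators F) := by
    refine ⟨fun a b => eq_of_commute_freeGroup_of (e.injective ?_)⟩
    rw [map_mul, map_mul, mul_comm']
  have : IsCyclic (FreeGroup (IsFreeGroup.Generators F)) := by
    rcases isEmpty_or_nonempty (IsFreeGroup.Generators F) with _ | ⟨⟨a⟩⟩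
    · infer_instance
    · have := uniqueOfSubsingleton a
      infer_instance
  exact isCyclic_of_surjective e e.surjective

lemma exists_zpow_eq_zpow_of_commute {F : Type*} [Group F] [IsFreeGroup F] {x y : F}
    (h : Commute x y) : ∃ i j : ℤ, (i ≠ 0 ∨ j ≠ 0) ∧ x ^ i = y ^ j := by
  have : IsMulCommutative (Subgroup.closure {x, y}) := by
    apply Subgroup.isMulCommutative_closure
    rintro a (rfl | rfl) b (rfl | rfl) <;> simp [h.eq]
  obtain ⟨c, hc⟩ := (Subgroup.isCyclic_iff_exists_zpowers_eq_top _).1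
    (isCyclic_of_isFreeGroup (Subgroup.closure {x, y}))
  obtain ⟨m, rfl⟩ : x ∈ Subgroup.zpowers c := hc ▸ Subgroup.subset_closure (by simp)
  obtain ⟨n, rfl⟩ : y ∈ Subgroup.zpowers c := hc ▸ Subgroup.subset_closure (by simp)
  by_cases hm : m = 0
  · exact ⟨1, 0, by simp [hm]⟩
  · exact ⟨n, m, Or.inr hm, zpow_comm c m n⟩

namespace RAAG

variable {V W : Type} {G : SimpleGraph V} {H : SimpleGraph W} {K : Type*} [Group K]

lemma commute_of_adj {u v : V} (h : G.Adj u v) :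
    Commute (PresentedGroup.of u : RAAG G) (PresentedGroup.of v) := by
  have hrel : PresentedGroup.mk (raagRels G) (FreeGroup.of u * FreeGroup.of v *
      (FreeGroup.of u)⁻¹ * (FreeGroup.of v)⁻¹) = 1 :=
    PresentedGroup.one_of_mem ⟨u, v, h, rfl⟩
  simp only [map_mul, map_inv] at hrel
  rwa [mul_inv_eq_one, mul_inv_eq_iff_eq_mul] at hrel

/-- The universal property of `A(G)`: a map from the vertices to a group that sends adjacent
vertices to commuting elements extends to a homomorphism. -/
def lift (f : V → K) (hf : ∀ u v, G.Adj u v → Commute (f u) (f v)) : RAAG G →* K :=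
  PresentedGroup.toGroup (f := f) (by
    rintro r ⟨u, v, h, rfl⟩
    simp only [map_mul, map_inv, FreeGroup.lift_apply_of]
    rw [(hf u v h).eq, mul_inv_cancel_right, mul_inv_cancel])

@[simp]
lemma lift_of (f : V → K) (hf : ∀ u v, G.Adj u v → Commute (f u) (f v)) (v : V) :
    lift f hf (PresentedGroup.of v) = f v :=
  PresentedGroup.toGroup.of _

/-- The homomorphism `A(G) → A(H)` induced by a graph homomorphism. -/
def map (f : G →g H) : RAAG G →* RAAG H :=
  lift (fun v => PresentedGroup.of (f v)) fun _ _ h => commute_of_adj (f.map_adj h)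

@[simp]
lemma map_of (f : G →g H) (v : V) :
    map f (PresentedGroup.of v) = PresentedGroup.of (f v) :=
  lift_of _ _ v

/-- The isomorphism `A(G) ≃ A(H)` induced by a graph isomorphism. -/
def mapEquiv (e : G ≃g H) : RAAG G ≃* RAAG H :=
  MonoidHom.toMulEquiv (map e.toHom) (map e.symm.toHom)
    (PresentedGroup.ext fun v => by simp)
    (PresentedGroup.ext fun v => by simp)

@[simp]
lemma mapEquiv_of (e : G ≃g H) (v : V) :
    mapEquiv e (PresentedGroup.of v) = PresentedGroup.of (e v) :=
  map_of e.toHom v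

/-- The retraction of `A(H)` onto `A(G)` for an induced subgraph `G` of `H`, killing the vertices
outside `G`. -/
noncomputable def retract (f : G ↪g H) : RAAG H →* RAAG G :=
  lift (Function.extend f PresentedGroup.of 1) (by
    intro u v h
    by_cases hu : ∃ a, f a = u
    · by_cases hv : ∃ b, f b = v
      · obtain ⟨a, rfl⟩ := hu
        obtain ⟨b, rfl⟩ := hv
        simpa only [f.injective.extend_apply] using commute_of_adj (f.map_adj_iff.1 h)
      · rw [Function.extend_apply' _ _ _ hv]
        exact Commute.one_right _
    · rw [Function.extend_apply' _ _ _ hu]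
      exact Commute.one_left _)

lemma retract_map (f : G ↪g H) (x : RAAG G) : retract f (map f.toHom x) = x := by
  have h : (retract f).comp (map f.toHom) = MonoidHom.id _ :=
    PresentedGroup.ext fun v => by simp [retract, f.injective.extend_apply]
  exact DFunLike.congr_fun h x

lemma map_injective (f : G ↪g H) : Function.Injective (map f.toHom) :=
  Function.LeftInverse.injective (retract_map f)

/-- The homomorphism `A(G ⊔ G) → A(G ⊔ H)` that conjugates the second copy of `G` by the
vertex `w` of `H`. -/
def conjDouble (G : SimpleGraph V) (H : SimpleGraph W) (w : W) : RAAG (G ⊕g G) →* RAAG (G ⊕g H) :=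
  lift
    (Sum.elim (fun v => PresentedGroup.of (Sum.inl v))
      fun v => MulAut.conj (PresentedGroup.of (Sum.inr w)) (PresentedGroup.of (Sum.inl v)))
    (by
      rintro (u | u) (v | v) h
      · exact commute_of_adj h
      · simp at h
      · simp at h
      · exact (commute_of_adj (G := G ⊕g H) (u := Sum.inl u) (v := Sum.inl v) h).map _)

/-- The automorphism of `A(G ⊔ G)` that exchanges the two copies of `G`. -/
def copySwap (G : SimpleGraph V) : MulAut (RAAG (G ⊕g G)) :=
  mapEquiv Iso.sumComm

@[simp]
lemma copySwap_of (v : V ⊕ V) :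
    copySwap G (PresentedGroup.of v) = PresentedGroup.of v.swap :=
  mapEquiv_of _ v

/-- The homomorphism from `A(G ⊔ H)` to the holomorph of `A(G ⊔ G)` that sends `G` to its first
copy and each vertex of `H` to `copySwap G`. -/
def swapHolomorph (G : SimpleGraph V) (H : SimpleGraph W) :
    RAAG (G ⊕g H) →* RAAG (G ⊕g G) ⋊[MonoidHom.id _] MulAut (RAAG (G ⊕g G)) :=
  lift
    (Sum.elim (fun v => SemidirectProduct.inl (PresentedGroup.of (Sum.inl v)))
      fun _ => SemidirectProduct.inr (copySwap G))
    (by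
      rintro (u | u) (v | v) h
      · exact (commute_of_adj (G := G ⊕g G) (u := Sum.inl u) (v := Sum.inl v) h).map _
      · simp at h
      · simp at h
      · exact Commute.refl _)

lemma swapHolomorph_comp_conjDouble (w : W) :
    (swapHolomorph G H).comp (conjDouble G H w) = SemidirectProduct.inl := by
  refine PresentedGroup.ext fun v => ?_
  rcases v with v | v
  · simp [swapHolomorph, conjDouble]
  · have hconj := SemidirectProduct.inl_aut (φ := MonoidHom.id _)
      (copySwap G) (PresentedGroup.of (Sum.inl v))
    rw [MonoidHom.id_apply, copySwap_of, Sum.swap_inl] at hconj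
    simp [swapHolomorph, conjDouble, hconj]

lemma conjDouble_injective (w : W) : Function.Injective (conjDouble G H w) := by
  refine Function.Injective.of_comp (f := swapHolomorph G H) ?_
  rw [← MonoidHom.coe_comp, swapHolomorph_comp_conjDouble]
  exact SemidirectProduct.inl_injective

lemma isFreeGroup_of_eq_bot (hG : G = ⊥) : IsFreeGroup (RAAG G) :=
  IsFreeGroup.ofMulEquiv <|
    MonoidHom.toMulEquiv (FreeGroup.lift PresentedGroup.of)
      (lift FreeGroup.of fun _ _ h => by simp [hG] at h)
      (FreeGroup.ext_hom _ _ fun v => by simp)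
      (PresentedGroup.ext fun v => by simp)

open Classical in
/-- The homomorphism `A(G) → ℤ` recording the exponent sum of the vertex `v`. -/
noncomputable def exponentSum (v : V) : RAAG G →* Multiplicative ℤ :=
  lift (Pi.mulSingle v (Multiplicative.ofAdd 1)) fun _ _ _ => Commute.all _ _

lemma eq_zero_of_of_zpow_eq {u v : V} (huv : u ≠ v) {i j : ℤ}
    (h : (PresentedGroup.of u : RAAG G) ^ i = PresentedGroup.of v ^ j) : i = 0 := by
  classical
  simpa [exponentSum, Pi.mulSingle_eq_of_ne' huv, ← ofAdd_zsmul] using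
    congrArg (exponentSum u) h

lemma not_injective_of_adj {F : Type*} [Group F] [IsFreeGroup F] {u v : V}
    (h : G.Adj u v) (φ : RAAG G →* F) : ¬ Function.Injective φ := by
  intro hφ
  obtain ⟨i, j, hij, hpow⟩ := exists_zpow_eq_zpow_of_commute ((commute_of_adj h).map φ)
  rw [← map_zpow, ← map_zpow] at hpow
  rcases hij with hi | hj
  · exact hi (eq_zero_of_of_zpow_eq h.ne (hφ hpow))
  · exact hj (eq_zero_of_of_zpow_eq h.ne' (hφ hpow).symm)

end RAAG

lemma pathGraph_eq_top {n : ℕ} (h : n ≤ 2) : pathGraph n = ⊤ := by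
  ext u v
  rw [pathGraph_adj, top_adj, ne_eq, Fin.ext_iff]
  omega

/-- `P_m` as the initial segment of `P_n`. -/
def pathGraphEmbedding {m n : ℕ} (h : m ≤ n) : pathGraph m ↪g pathGraph n where
  toEmbedding := Fin.castLEEmb h
  map_rel_iff' := by simp [pathGraph_adj]

/-- The complement of `P_3` is the disjoint union of an edge (joining the two ends of the path)
and a vertex (the middle of the path). -/
def complPathGraphThreeIso :
    (pathGraph 3)ᶜ ≃g (⊤ : SimpleGraph (Fin 2)) ⊕g (⊥ : SimpleGraph Unit) where
  toFun := ![Sum.inl 0, Sum.inr (), Sum.inl 1]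
  invFun := Sum.elim ![0, 2] fun _ => 1
  left_inv := by decide
  right_inv := by decide
  map_rel_iff' {u v} := by
    fin_cases u <;> fin_cases v <;> simp [pathGraph_adj]

lemma compl_cycleGraph_four_adj {u v : Fin 4} : (cycleGraph 4)ᶜ.Adj u v ↔ v = u + 2 := by
  rw [compl_adj, cycleGraph_adj]
  revert u v
  decide

/-- The complement of `C_4` is the disjoint union of two edges, the diagonals of the cycle. -/
def complCycleGraphFourIso :
    (cycleGraph 4)ᶜ ≃g (⊤ : SimpleGraph (Fin 2)) ⊕g (⊤ : SimpleGraph (Fin 2)) where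
  toFun := ![Sum.inl 0, Sum.inr 0, Sum.inl 1, Sum.inr 1]
  invFun := Sum.elim ![0, 2] ![1, 3]
  left_inv := by decide
  right_inv := by decide
  map_rel_iff' {u v} := by
    rw [compl_cycleGraph_four_adj]
    fin_cases u <;> fin_cases v <;> simp

/-- `G(C_4) ↪ G(P_n)` iff `3 ≤ n`. -/
theorem statement7 (n : ℕ) (hn : 0 < n) :
    (∃ φ : GG (cycleGraph 4) →* GG (pathGraph n), Function.Injective φ) ↔ 3 ≤ n := by
  constructor
  · rintro ⟨φ, hφ⟩
    by_contra! hlt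
    have hfree : IsFreeGroup (GG (pathGraph n)) :=
      RAAG.isFreeGroup_of_eq_bot (compl_eq_bot.2 (pathGraph_eq_top (by omega)))
    have hdiag : (cycleGraph 4)ᶜ.Adj 0 2 := compl_cycleGraph_four_adj.2 rfl
    exact RAAG.not_injective_of_adj hdiag φ hφ
  · intro h
    let ι : (⊤ : SimpleGraph (Fin 2)) ⊕g (⊥ : SimpleGraph Unit) ↪g (pathGraph n)ᶜ :=
      (Embedding.complEquiv (pathGraphEmbedding h)).comp complPathGraphThreeIso.symm.toEmbedding
    exact ⟨(RAAG.map ι.toHom).comp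
        ((RAAG.conjDouble ⊤ ⊥ ()).comp (RAAG.mapEquiv complCycleGraphFourIso).toMonoidHom),
      (RAAG.map_injective ι).comp
        ((RAAG.conjDouble_injective ()).comp (RAAG.mapEquiv complCycleGraphFourIso).injective)⟩
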